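/- Let K be a finite abelian group admitting a nondegenerate alternating bicharacter e : K × K → U(1). Then there exists a finite abelian group A such that K is isomorphic to A × A; in particular, the order of K is a perfect square. -/

import Mathlib

/-!
The proof splits off hyperbolic planes. Let `x` have maximal order `n`, the exponent of `K`.
The character `e x` has order `n` by nondegeneracy, and its image is cyclic, so some
`ζ = e x y` has order `n`; hence `y` has order `n` too. All values `e x k` and `e k y` are
`n`-th roots of unity, that is, powers of `ζ`, so every `k` can be corrected by powers of `x` and
`y` to lie in the orthogonal complement `P` of `{x, y}`. This gives
`K ≃* ⟨x⟩ × ⟨y⟩ × P` with `⟨x⟩ ≃* ⟨y⟩`, and `e` restricted to `P` is again nondegenerate, so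
strong induction on the order applies (`exists_square`). In the induction nondegeneracy is used
only in the form "`e♭` has trivial kernel", which passes to `P` without any duality theory.
-/

/-- An alternating bicharacter on an abelian group `K` (no topology): a map `K × K → U(1)`
which is a homomorphism in each variable separately and satisfies `e k k = 1`. -/
def IsAltBicharacter {K : Type*} [CommGroup K] (e : K → K → Circle) : Prop :=
  (∀ k l l' : K, e k (l * l') = e k l * e k l') ∧
  (∀ k k' l : K, e (k * k') l = e k l * e k' l) ∧
  ∀ k : K, e k k = 1

/-- Nondegeneracy for a discrete group: the map `e♭ : K → Hom(K, U(1))`, `(e♭ l) k = e k l`,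
is a group isomorphism. -/
def IsNondegenerate {K : Type*} [CommGroup K] (e : K → K → Circle) : Prop :=
  ∃ F : K ≃* (K →* Circle), ∀ k l : K, F l k = e k l

/-- An element `ζ` of finite order of the circle generates the group of roots of unity whose order
divides that of `ζ`. -/
lemma Circle.exists_pow_eq_of_pow_orderOf_eq_one {ζ z : Circle} (h0 : 0 < orderOf ζ)
    (hz : z ^ orderOf ζ = 1) : ∃ i : ℕ, ζ ^ i = z := by
  have hp : IsPrimitiveRoot (Circle.coeHom ζ) (orderOf ζ) :=
    (IsPrimitiveRoot.orderOf ζ).map_of_injective Circle.coe_injective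
  have : NeZero (orderOf ζ) := ⟨h0.ne'⟩
  obtain ⟨i, -, hi⟩ := hp.eq_pow_of_pow_eq_one (ξ := Circle.coeHom z)
    (by rw [← map_pow, hz, map_one])
  exact ⟨i, Circle.coe_injective ((map_pow Circle.coeHom ζ i).trans hi)⟩

namespace IsAltBicharacter

variable {K : Type*} [CommGroup K] {e : K → K → Circle}

/-- The character `e k` of `K`. -/
noncomputable def left (he : IsAltBicharacter e) (k : K) : K →* Circle := MonoidHom.mk' (e k) (he.1 k)

/-- The character `k ↦ e k l` of `K`, called `e♭ l` in the definition of nondegeneracy. -/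
noncomputable def right (he : IsAltBicharacter e) (l : K) : K →* Circle :=
  MonoidHom.mk' (fun k => e k l) (fun k k' => he.2.1 k k' l)

lemma left_apply (he : IsAltBicharacter e) (k l : K) : he.left k l = e k l := rfl

lemma right_apply (he : IsAltBicharacter e) (k l : K) : he.right l k = e k l := rfl

lemma mul_swap (he : IsAltBicharacter e) (k l : K) : e k l * e l k = 1 := by
  have h := he.2.2 (k * l)
  rw [he.1, he.2.1, he.2.1, he.2.2, he.2.2] at h
  rw [mul_comm]
  simpa using h

lemma eq_one_swap (he : IsAltBicharacter e) {k l : K} (h : e k l = 1) : e l k = 1 := by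
  simpa [h] using he.mul_swap k l

lemma pow_right (he : IsAltBicharacter e) (k l : K) (i : ℕ) : e k (l ^ i) = e k l ^ i :=
  map_pow (he.left k) l i

lemma pow_left (he : IsAltBicharacter e) (k l : K) (i : ℕ) : e (k ^ i) l = e k l ^ i :=
  map_pow (he.right l) k i

lemma one_left (he : IsAltBicharacter e) (l : K) : e 1 l = 1 := map_one (he.right l)

lemma one_right (he : IsAltBicharacter e) (k : K) : e k 1 = 1 := map_one (he.left k)

/-- If `e♭` has trivial kernel, there are `x`, `y` whose order, as well as that of `e x y`, is the
exponent of `K`. -/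
lemma exists_hyperbolic_pair [Finite K] (he : IsAltBicharacter e)
    (hnd : ∀ l, (∀ k, e k l = 1) → l = 1) :
    ∃ x y : K, orderOf x = Monoid.exponent K ∧ orderOf y = Monoid.exponent K ∧
      orderOf (e x y) = Monoid.exponent K := by
  obtain ⟨x, hx⟩ := Monoid.exists_orderOf_eq_exponent (Monoid.ExponentExists.of_finite (G := K))
  have : Finite (he.left x).range := Set.finite_range (he.left x)
  have : IsCyclic (he.left x).range :=
    isCyclic_of_injective_ringHom (Circle.coeHom.comp (he.left x).range.subtype)
      (Circle.coe_injective.comp Subtype.coe_injective)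
  obtain ⟨⟨_, y, rfl⟩, hy⟩ := IsCyclic.exists_generator (α := (he.left x).range)
  have hdvd : Monoid.exponent K ∣ orderOf (e x y) := by
    rw [← hx]
    refine orderOf_dvd_of_pow_eq_one (hnd _ fun k => he.eq_one_swap ?_)
    obtain ⟨j, hj⟩ := hy ⟨_, k, rfl⟩
    have hj' : e x y ^ j = e x k := congrArg Subtype.val hj
    rw [he.pow_left, ← hj', ← zpow_natCast, zpow_comm, zpow_natCast, pow_orderOf_eq_one, one_zpow]
  have hy' : orderOf (e x y) ∣ orderOf y :=
    orderOf_dvd_of_pow_eq_one (by rw [← he.pow_right, pow_orderOf_eq_one, he.one_right])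
  have hye : orderOf y ∣ Monoid.exponent K := Monoid.order_dvd_exponent y
  exact ⟨x, y, hx, hye.antisymm (hdvd.trans hy'), (hy'.trans hye).antisymm hdvd⟩

/-- The orthogonal complement of `{x, y}`. -/
noncomputable def perp (he : IsAltBicharacter e) (x y : K) : Subgroup K := (he.left x).ker ⊓ (he.right y).ker

lemma mem_perp (he : IsAltBicharacter e) {x y k : K} :
    k ∈ he.perp x y ↔ e x k = 1 ∧ e k y = 1 := Iff.rfl

/-- Every element is a product of a power of `x`, a power of `y` and an element orthogonal to
both. -/
lemma exists_decomp [Finite K] (he : IsAltBicharacter e) {x y : K}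
    (hζ : orderOf (e x y) = Monoid.exponent K) (k : K) :
    ∃ a b : ℕ, ∃ p ∈ he.perp x y, x ^ a * y ^ b * p = k := by
  have h0 : 0 < orderOf (e x y) := by
    rw [hζ]; exact Monoid.ExponentExists.of_finite.exponent_pos
  obtain ⟨b, hb⟩ := Circle.exists_pow_eq_of_pow_orderOf_eq_one h0 (z := e x k) (by
    rw [hζ, ← he.pow_right, Monoid.pow_exponent_eq_one, he.one_right])
  obtain ⟨a, ha⟩ := Circle.exists_pow_eq_of_pow_orderOf_eq_one h0 (z := e k y) (by
    rw [hζ, ← he.pow_left, Monoid.pow_exponent_eq_one, he.one_left])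
  refine ⟨a, b, (x ^ a * y ^ b)⁻¹ * k, he.mem_perp.2 ⟨?_, ?_⟩, mul_inv_cancel_left _ _⟩
  · rw [← he.left_apply, map_mul, map_inv, map_mul, map_pow, map_pow]
    simp only [left_apply, he.2.2, hb]
    simp
  · rw [← he.right_apply, map_mul, map_inv, map_mul, map_pow, map_pow]
    simp only [right_apply, he.2.2, ha]
    simp

/-- The splitting of `K` along a hyperbolic pair. -/
lemma nonempty_mulEquiv [Finite K] (he : IsAltBicharacter e) {x y : K}
    (hx : orderOf x = Monoid.exponent K) (hy : orderOf y = Monoid.exponent K)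
    (hζ : orderOf (e x y) = Monoid.exponent K) :
    Nonempty ((Subgroup.zpowers x × Subgroup.zpowers y) × he.perp x y ≃* K) := by
  let f : (Subgroup.zpowers x × Subgroup.zpowers y) × he.perp x y →* K :=
    ((Subgroup.zpowers x).subtype.coprod (Subgroup.zpowers y).subtype).coprod
      (he.perp x y).subtype
  refine ⟨MulEquiv.ofBijective f ⟨(injective_iff_map_eq_one f).2 ?_, fun k => ?_⟩⟩
  · rintro ⟨⟨⟨_, a, rfl⟩, ⟨_, b, rfl⟩⟩, p, hp⟩ h
    have h' : x ^ a * y ^ b * p = 1 := h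
    obtain ⟨hp1, hp2⟩ := he.mem_perp.1 hp
    -- Pairing with `x` on the left isolates the power of `y`, pairing with `y` that of `x`.
    have hb : e x y ^ b = 1 := by
      have := congrArg (he.left x) h'
      simp only [map_mul, map_zpow, map_one] at this
      simpa [left_apply, he.2.2, hp1] using this
    have ha : e x y ^ a = 1 := by
      have := congrArg (he.right y) h'
      simp only [map_mul, map_zpow, map_one] at this
      simpa [right_apply, he.2.2, hp2] using this
    rw [← orderOf_dvd_iff_zpow_eq_one, hζ] at ha hb
    have hya : x ^ a = 1 := by rwa [← orderOf_dvd_iff_zpow_eq_one, hx]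
    have hyb : y ^ b = 1 := by rwa [← orderOf_dvd_iff_zpow_eq_one, hy]
    have hp' : p = 1 := by simpa [hya, hyb] using h'
    ext <;> simp [hya, hyb, hp']
  · obtain ⟨a, b, p, hp, h⟩ := he.exists_decomp hζ k
    exact ⟨((⟨x ^ a, a, by simp⟩, ⟨y ^ b, b, by simp⟩), ⟨p, hp⟩), h⟩

end IsAltBicharacter

/-- The theorem under the weaker hypothesis that `e♭` has trivial kernel, with `A` in the universe
of `K`. -/
lemma IsAltBicharacter.exists_square.{u} (n : ℕ) : ∀ (K : Type u) [CommGroup K] [Finite K]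
    (e : K → K → Circle), IsAltBicharacter e → (∀ l, (∀ k, e k l = 1) → l = 1) →
    Nat.card K = n → ∃ (A : Type u) (_ : CommGroup A), Finite A ∧ Nonempty (K ≃* A × A) := by
  induction n using Nat.strong_induction_on with
  | _ n ih =>
  intro K _ _ e he hnd hn
  obtain ⟨x, y, hx, hy, hζ⟩ := he.exists_hyperbolic_pair hnd
  rcases subsingleton_or_nontrivial K with hK | hK
  · have : Unique K := uniqueOfSubsingleton 1
    have : Unique (K × K) := uniqueOfSubsingleton 1
    exact ⟨K, inferInstance, inferInstance, ⟨MulEquiv.ofUnique⟩⟩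
  have hlt : Nat.card (he.perp x y) < n := by
    rw [← hn]
    refine Finite.card_subtype_lt (x := x) fun hxP => ?_
    have h1 : e x y = 1 := (he.mem_perp.1 hxP).2
    rw [h1, orderOf_one] at hζ
    exact not_subsingleton K (Monoid.exp_eq_one_iff.1 hζ.symm)
  have heP : IsAltBicharacter fun k l : he.perp x y => e k l :=
    ⟨fun k l l' => he.1 k l l', fun k k' l => he.2.1 k k' l, fun k => he.2.2 k⟩
  obtain ⟨B, _, _, ⟨φ⟩⟩ := ih _ hlt (he.perp x y) _ heP (fun l hl => by
    obtain ⟨hl1, hl2⟩ := he.mem_perp.1 l.2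
    -- `l` is orthogonal to `x`, `y` and their complement, hence to all of `K`.
    refine Subtype.ext (hnd l fun k => ?_)
    obtain ⟨a, b, p, hp, rfl⟩ := he.exists_decomp hζ k
    rw [he.2.1, he.2.1, he.pow_left, he.pow_left, hl1, he.eq_one_swap hl2, hl ⟨p, hp⟩]
    simp) rfl
  obtain ⟨ψ⟩ := he.nonempty_mulEquiv hx hy hζ
  have σ : Subgroup.zpowers y ≃* Subgroup.zpowers x :=
    mulEquivOfCyclicCardEq (by rw [Nat.card_zpowers, Nat.card_zpowers, hx, hy])
  exact ⟨Subgroup.zpowers x × B, inferInstance, inferInstance,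
    ⟨ψ.symm.trans ((MulEquiv.prodCongr (MulEquiv.prodCongr (MulEquiv.refl _) σ) φ).trans
      (MulEquiv.prodProdProdComm _ _ _ _))⟩⟩

/-- A finite abelian group admitting a nondegenerate alternating bicharacter is of the form
`A × A`; in particular its order is a perfect square. -/
theorem finite_heisenberg_phase_space_is_square
    {K : Type*} [CommGroup K] [Finite K]
    (e : K → K → Circle) (he : IsAltBicharacter e) (hnd : IsNondegenerate e) :
    ∃ (A : Type) (_iA : CommGroup A), Finite A ∧ Nonempty (K ≃* A × A) ∧
      ∃ m : ℕ, Nat.card K = m * m := by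
  obtain ⟨F, hF⟩ := hnd
  have hker : ∀ l, (∀ k, e k l = 1) → l = 1 := fun l hl =>
    F.map_eq_one_iff.1 (MonoidHom.ext fun k => (hF k l).trans (hl k))
  obtain ⟨A, _, _, ⟨φ⟩⟩ := IsAltBicharacter.exists_square _ K e he hker rfl
  -- `A` lives in the universe of `K`; being finite, it has a copy in `Type`.
  refine ⟨Shrink.{0} A, inferInstance, Finite.of_equiv A (equivShrink.{0} A),
    ⟨φ.trans (MulEquiv.prodCongr Shrink.mulEquiv.symm Shrink.mulEquiv.symm)⟩, Nat.card A, ?_⟩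
  rw [Nat.card_congr φ.toEquiv, Nat.card_prod]
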